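/- (Darboux–Weinstein theorem.) Split ℝ^d = ℝ^k_x × ℝ^{d−k}_y and write points as (x,y). Let ω₀ and ω₁ be two smooth maps from a neighborhood of 0 in ℝ^d into the alternating bilinear forms on ℝ^d, both closed (the cyclic sum of the Fréchet derivative vanishes: Dω_i(z)[u](v,w) + Dω_i(z)[v](w,u) + Dω_i(z)[w](u,v) = 0 for all u,v,w) and both non-degenerate at every point of that neighborhood. Let α ≥ 1 and assume there is C > 0 with ‖ω₁(x,y) − ω₀(x,y)‖ ≤ C|x|^α for all (x,y) in that neighborhood. Then there exist an open neighborhood V of 0 in ℝ^d, a smooth map ψ : V → ℝ^d which is a diffeomorphism onto its image, and C' > 0 such that: (i) ω₁(ψ(z))(Dψ(z)u, Dψ(z)v) = ω₀(z)(u,v) for all z ∈ V and u,v ∈ ℝ^d (i.e. ψ*ω₁ = ω₀); and (ii) ‖ψ(x,y) − (x,y)‖ ≤ C'|x|^{α+1} for all (x,y) ∈ V. -/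

import Mathlib

noncomputable section

/-- `f` is a smooth diffeomorphism from `U` onto `V`. -/
def IsDiffeoOn {E F : Type*} [NormedAddCommGroup E] [NormedSpace ℝ E]
    [NormedAddCommGroup F] [NormedSpace ℝ F] (f : E → F) (U : Set E) (V : Set F) : Prop :=
  ContDiffOn ℝ (⊤ : ℕ∞) f U ∧ Set.BijOn f U V ∧
    ∃ finv : F → E, ContDiffOn ℝ (⊤ : ℕ∞) finv V ∧ Set.InvOn finv f U V

/-- A 2-form is closed on `W` when the cyclic sum of its Fréchet derivative
vanishes there. -/
def Closed2FormOn {X : Type*} [NormedAddCommGroup X] [NormedSpace ℝ X]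
    (ω : X → (X →L[ℝ] X →L[ℝ] ℝ)) (W : Set X) : Prop :=
  ∀ z ∈ W, ∀ u v w : X,
    fderiv ℝ ω z u v w + fderiv ℝ ω z v w u + fderiv ℝ ω z w u v = 0

/-!
Moser's argument. The form `η = ω₁ - ω₀` is closed and vanishes to order `α` on the range of the
projection `π`, the subspace `{x = 0}`. Integrating along the retraction onto that subspace, the
relative Poincaré lemma gives a primitive `l` of `η` which gains one order: `l = O(|x|^(α+1))`.
The segment `ωₜ = (1 - t) ω₀ + t ω₁` is non-degenerate near `0`, because `ω₀` and `ω₁` agree there,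
so `ωₜ(ξₜ, ·) = -l` defines a vector field `ξₜ = O(|x|^(α+1))` with `L_{ξₜ} ωₜ + ω₁ - ω₀ = 0`.
Hence its flow `φₜ` satisfies `φₜ* ωₜ = ω₀`, and `ψ = φ₁` is the required diffeomorphism: along an
orbit `|x|` at most doubles, so that `ψ - id = O(|x|^(α+1))`.

Smooth dependence of the flow on its initial value comes from the inverse function theorem in
`C([0, 1], E)`, where superposition with a smooth map is a smooth operator.
-/

namespace DarbouxWeinstein

set_option maxSynthPendingDepth 3

open Set Filter Asymptotics
open scoped Topology unitInterval ContDiff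

universe u

section Superposition

variable {K : Type*} [TopologicalSpace K]

section Continuity

variable {E F : Type*} {f : E → F} {U : Set E}

variable (K) in
/-- The continuous maps from `K` into `E` with values in `U`. -/
def mapsInto [TopologicalSpace E] (U : Set E) : Set C(K, E) := {γ | ∀ s, γ s ∈ U}

/-- The superposition (Nemytskii) operator `γ ↦ f ∘ γ`, with value `0` where `f ∘ γ` is not
continuous. -/
def superposition [TopologicalSpace E] [TopologicalSpace F] [Zero F] (f : E → F)
    (γ : C(K, E)) : C(K, F) :=
  .mkD (f ∘ γ) 0

theorem superposition_apply [TopologicalSpace E] [TopologicalSpace F] [Zero F]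
    {γ : C(K, E)} (hf : ContinuousOn f U) (hγ : γ ∈ mapsInto K U) (s : K) :
    superposition f γ s = f (γ s) :=
  ContinuousMap.mkD_apply_of_continuous (hf.comp_continuous γ.continuous hγ)

variable [CompactSpace K]

theorem isOpen_mapsInto [TopologicalSpace E] (hU : IsOpen U) : IsOpen (mapsInto K U) := by
  simpa [mapsInto, MapsTo] using
    ContinuousMap.isOpen_setOfPred_mapsTo (X := K) isCompact_univ hU

theorem continuousOn_superposition [PseudoMetricSpace E] [PseudoMetricSpace F] [Zero F]
    (hU : IsOpen U) (hf : ContinuousOn f U) :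
    ContinuousOn (superposition (K := K) f) (mapsInto K U) := by
  refine (isOpen_mapsInto hU).continuousOn_iff.2 fun γ hγ => Metric.continuousAt_iff'.2 ?_
  intro ε hε
  have hmem := (isCompact_range γ.continuous).uniformContinuousAt_of_continuousAt f
    (by rintro _ ⟨s, rfl⟩; exact hf.continuousAt (hU.mem_nhds (hγ s)))
    (Metric.dist_mem_uniformity (half_pos hε))
  obtain ⟨δ, hδ, hunif⟩ := Metric.mem_uniformity_dist.1 hmem
  filter_upwards [(isOpen_mapsInto hU).mem_nhds hγ, Metric.ball_mem_nhds γ hδ] with γ' hγ' hdist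
  refine ((ContinuousMap.dist_le (half_pos hε).le).2 fun s => ?_).trans_lt (half_lt_self hε)
  rw [superposition_apply hf hγ', superposition_apply hf hγ, dist_comm]
  exact (hunif ((ContinuousMap.dist_apply_le_dist s).trans_lt (Metric.mem_ball'.1 hdist))
    (mem_range_self s)).le

end Continuity

section Smoothness

variable [CompactSpace K] {E F : Type u} [NormedAddCommGroup E] [NormedSpace ℝ E]
  [NormedAddCommGroup F] [NormedSpace ℝ F] {f : E → F} {U : Set E} {γ : C(K, E)}

/-- The continuous bilinear map sending a family of operators `A` and a family of vectors `h`,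
both parametrised by `K`, to the family `s ↦ A s (h s)`. -/
def pointwiseApply : C(K, E →L[ℝ] F) →L[ℝ] C(K, E) →L[ℝ] C(K, F) :=
  LinearMap.mkContinuous₂
    (LinearMap.mk₂ ℝ (fun (A : C(K, E →L[ℝ] F)) (h : C(K, E)) =>
        (⟨fun s => A s (h s), A.continuous.clm_apply h.continuous⟩ : C(K, F)))
      (by intros; ext; simp) (by intros; ext; simp) (by intros; ext; simp) (by intros; ext; simp))
    1 fun A h => by
      rw [one_mul, ContinuousMap.norm_le _ (by positivity)]
      exact fun s => (A s).le_of_opNorm_le_of_le (A.norm_coe_le_norm s) (h.norm_coe_le_norm s)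

@[simp]
theorem pointwiseApply_apply (A : C(K, E →L[ℝ] F)) (h : C(K, E)) (s : K) :
    pointwiseApply A h s = A s (h s) :=
  rfl

theorem hasFDerivAt_superposition (hU : IsOpen U) (hf : ContDiffOn ℝ 1 f U)
    (hγ : γ ∈ mapsInto K U) :
    HasFDerivAt (superposition f) (pointwiseApply (superposition (fderiv ℝ f) γ)) γ := by
  have hf' : ContinuousOn (fderiv ℝ f) U := hf.continuousOn_fderiv_of_isOpen hU le_rfl
  have hcont := (continuousOn_superposition hU hf').continuousAt ((isOpen_mapsInto hU).mem_nhds hγ)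
  rw [hasFDerivAt_iff_isLittleO_nhds_zero, isLittleO_iff]
  intro ε hε
  obtain ⟨δ, hδ, hball⟩ := Metric.eventually_nhds_iff_ball.1
    (((isOpen_mapsInto hU).eventually_mem hγ).and (Metric.continuousAt_iff'.1 hcont ε hε))
  filter_upwards [Metric.ball_mem_nhds (0 : C(K, E)) hδ] with h hh
  have hsegment : ∀ θ ∈ Icc (0 : ℝ) 1, γ + θ • h ∈ Metric.ball γ δ := fun θ hθ => by
    rw [mem_ball_iff_norm, add_sub_cancel_left, norm_smul, Real.norm_of_nonneg hθ.1]
    exact (mul_le_of_le_one_left (norm_nonneg h) hθ.2).trans_lt (mem_ball_zero_iff.1 hh)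
  rw [ContinuousMap.norm_le _ (by positivity)]
  intro s
  have hmean : ‖f (γ s + h s) - f (γ s) - fderiv ℝ f (γ s) (γ s + h s - γ s)‖
      ≤ ε * ‖γ s + h s - γ s‖ := by
    refine (convex_segment (γ s) (γ s + h s)).norm_image_sub_le_of_norm_hasFDerivWithin_le'
      (f' := fderiv ℝ f) ?_ ?_ (left_mem_segment ℝ _ _) (right_mem_segment ℝ _ _)
    all_goals
      intro x hx
      obtain ⟨θ, hθ, rfl⟩ := (segment_eq_image' ℝ (γ s) (γ s + h s)).subset hx
      rw [add_sub_cancel_left]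
      obtain ⟨hmem, hclose⟩ := hball _ (hsegment θ hθ)
    · exact ((hf.contDiffAt (hU.mem_nhds (hmem s))).differentiableAt
        one_ne_zero).hasFDerivAt.hasFDerivWithinAt
    · have := (ContinuousMap.dist_apply_le_dist s).trans hclose.le
      rwa [superposition_apply hf' hmem, superposition_apply hf' hγ, dist_eq_norm] at this
  have hγh : γ + h ∈ mapsInto K U := (hball _ (by simpa using hsegment 1 (by simp))).1
  rw [add_sub_cancel_left] at hmean
  simpa [superposition_apply hf.continuousOn hγh, superposition_apply hf.continuousOn hγ,
    superposition_apply hf' hγ] using hmean.trans (by gcongr; exact h.norm_coe_le_norm s)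

theorem contDiffOn_superposition (hU : IsOpen U) (hf : ContDiffOn ℝ ∞ f U) :
    ContDiffOn ℝ ∞ (superposition (K := K) f) (mapsInto K U) := by
  refine contDiffOn_infty.2 fun n => ?_
  replace hf := contDiffOn_infty.1 hf n
  induction n generalizing F with
  | zero => exact contDiffOn_zero.2 (continuousOn_superposition hU hf.continuousOn)
  | succ n ih =>
    have hderiv (γ) (hγ : γ ∈ mapsInto K U) :=
      hasFDerivAt_superposition hU (hf.of_le (by exact_mod_cast Nat.le_add_left 1 n)) hγ
    push_cast at hf ⊢
    rw [contDiffOn_succ_iff_fderiv_of_isOpen (isOpen_mapsInto hU)]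
    refine ⟨fun γ hγ => (hderiv γ hγ).differentiableAt.differentiableWithinAt, by simp, ?_⟩
    refine (pointwiseApply.contDiff.comp_contDiffOn
      (ih ((contDiffOn_succ_iff_fderiv_of_isOpen hU).1 hf).2.2)).congr fun γ hγ => ?_
    exact (hderiv γ hγ).fderiv

end Smoothness

end Superposition

section TimeDependent

section Continuity

variable {E F : Type*} [TopologicalSpace E] [TopologicalSpace F] [Zero F] {f : ℝ × E → F}
  {U : Set (ℝ × E)} {γ : C(I, E)}

/-- The graph `s ↦ (s, γ s)` of a curve, turning time-dependent maps into autonomous ones. -/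
def graph (γ : C(I, E)) : C(I, ℝ × E) := .prodMk ⟨Subtype.val, continuous_subtype_val⟩ γ

/-- The curves whose graph stays in `U`. -/
def curvesIn (U : Set (ℝ × E)) : Set C(I, E) := graph ⁻¹' mapsInto I U

/-- The superposition operator `γ ↦ (s ↦ f (s, γ s))` of a time-dependent map. -/
def timeSuperposition (f : ℝ × E → F) (γ : C(I, E)) : C(I, F) := superposition f (graph γ)

theorem timeSuperposition_apply (hf : ContinuousOn f U) (hγ : γ ∈ curvesIn U) (s : I) :
    timeSuperposition f γ s = f (s, γ s) :=
  superposition_apply hf hγ s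

end Continuity

section Smoothness

variable {E F : Type u} [NormedAddCommGroup E] [NormedSpace ℝ E]
  [NormedAddCommGroup F] [NormedSpace ℝ F] {f : ℝ × E → F} {U : Set (ℝ × E)} {γ : C(I, E)}

theorem hasFDerivAt_graph (γ : C(I, E)) :
    HasFDerivAt graph ((ContinuousLinearMap.inr ℝ ℝ E).compLeftContinuous ℝ I) γ := by
  have haffine : graph = fun γ : C(I, E) =>
      (ContinuousLinearMap.inr ℝ ℝ E).compLeftContinuous ℝ I γ + graph 0 := by
    funext γ
    ext <;> simp [graph]
  rw [haffine]
  exact (ContinuousLinearMap.hasFDerivAt _).add_const _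

theorem contDiff_graph : ContDiff ℝ ∞ (graph : C(I, E) → C(I, ℝ × E)) := by
  rw [contDiff_infty_iff_fderiv, funext fun γ : C(I, E) => (hasFDerivAt_graph γ).fderiv]
  exact ⟨fun γ => (hasFDerivAt_graph γ).differentiableAt, contDiff_const⟩

theorem isOpen_curvesIn (hU : IsOpen U) : IsOpen (curvesIn U) :=
  (isOpen_mapsInto hU).preimage (contDiff_graph (E := E)).continuous

theorem contDiffOn_timeSuperposition (hU : IsOpen U) (hf : ContDiffOn ℝ ∞ f U) :
    ContDiffOn ℝ ∞ (timeSuperposition f) (curvesIn U) :=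
  (contDiffOn_superposition hU hf).comp contDiff_graph.contDiffOn fun _ hγ => hγ

theorem differentiableAt_timeSuperposition (hU : IsOpen U) (hf : ContDiffOn ℝ ∞ f U)
    (hγ : γ ∈ curvesIn U) : DifferentiableAt ℝ (timeSuperposition f) γ :=
  ((contDiffOn_timeSuperposition hU hf).contDiffAt
    ((isOpen_curvesIn hU).mem_nhds hγ)).differentiableAt (by simp)

theorem fderiv_timeSuperposition_apply (hU : IsOpen U) (hf : ContDiffOn ℝ ∞ f U)
    (hγ : γ ∈ curvesIn U) (h : C(I, E)) (s : I) :
    fderiv ℝ (timeSuperposition f) γ h s = fderiv ℝ f (s, γ s) (0, h s) := by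
  have hderiv : HasFDerivAt (timeSuperposition f) _ γ :=
    (hasFDerivAt_superposition hU (hf.of_le (by exact_mod_cast le_top)) hγ).comp γ
      (hasFDerivAt_graph γ)
  rw [hderiv.fderiv, ContinuousLinearMap.comp_apply, pointwiseApply_apply,
    superposition_apply (hf.continuousOn_fderiv_of_isOpen hU (by simp)) hγ]
  rfl

end Smoothness

end TimeDependent

section Integration

section Primitive

variable {E : Type*} [NormedAddCommGroup E] [NormedSpace ℝ E] {g h : C(I, E)} {c : E} {t : ℝ}

variable (E) in
/-- The embedding of a space as the constant curves. -/
def constCurve : E →L[ℝ] C(I, E) :=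
  LinearMap.mkContinuous
    { toFun := ContinuousMap.const I
      map_add' := fun _ _ => rfl
      map_smul' := fun _ _ => rfl } 1 fun z => by
    rw [one_mul, ContinuousMap.norm_le _ (norm_nonneg z)]
    exact fun _ => le_rfl

theorem constCurve_apply (c : E) (t : I) : constCurve E c t = c :=
  rfl

theorem norm_integral_IccExtend_le (g : C(I, E)) (t : I) :
    ‖∫ s in (0 : ℝ)..t, IccExtend zero_le_one g s‖ ≤ ‖g‖ := by
  refine (intervalIntegral.norm_integral_le_of_norm_le_const (C := ‖g‖)
    fun s _ => g.norm_coe_le_norm _).trans ?_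
  rw [sub_zero, abs_of_nonneg t.2.1]
  exact mul_le_of_le_one_right (norm_nonneg g) t.2.2

variable (E) in
/-- The integral operator `g ↦ (t ↦ ∫₀ᵗ g)`. -/
def primitive : C(I, E) →L[ℝ] C(I, E) :=
  have hint (g : C(I, E)) (a b : ℝ) :
      IntervalIntegrable (IccExtend zero_le_one g) MeasureTheory.volume a b :=
    g.continuous.Icc_extend'.intervalIntegrable a b
  LinearMap.mkContinuous
    { toFun := fun g =>
        ⟨fun t => ∫ s in (0 : ℝ)..t, IccExtend zero_le_one g s,
          (intervalIntegral.continuous_primitive (hint g) 0).comp continuous_subtype_val⟩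
      map_add' := fun g h => by
        ext t
        exact intervalIntegral.integral_add (hint g 0 t) (hint h 0 t)
      map_smul' := fun c g => by
        ext t
        exact intervalIntegral.integral_smul c _ } 1 fun g => by
    rw [one_mul, ContinuousMap.norm_le _ (norm_nonneg g)]
    exact norm_integral_IccExtend_le g

theorem primitive_apply (g : C(I, E)) (t : I) :
    primitive E g t = ∫ s in (0 : ℝ)..t, IccExtend zero_le_one g s :=
  rfl

theorem norm_primitive_le (g : C(I, E)) : ‖primitive E g‖ ≤ ‖g‖ :=
  (ContinuousMap.norm_le _ (norm_nonneg g)).2 (norm_integral_IccExtend_le g)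

theorem apply_zero_of_eq_add_primitive (hg : g = constCurve E c + primitive E h) :
    g 0 = c := by
  simp [hg, constCurve_apply, primitive_apply]

theorem hasDerivWithinAt_of_eq_add_primitive [CompleteSpace E]
    (hg : g = constCurve E c + primitive E h) (ht : t ∈ I) :
    HasDerivWithinAt (IccExtend zero_le_one g) (h ⟨t, ht⟩) I t := by
  have hderiv : HasDerivAt (fun x : ℝ => c + ∫ s in (0 : ℝ)..x, IccExtend zero_le_one h s)
      (h ⟨t, ht⟩) t := by
    rw [← IccExtend_of_mem zero_le_one h ht]
    exact (h.continuous.Icc_extend'.integral_hasStrictDerivAt 0 t).hasDerivAt.const_add c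
  refine hderiv.hasDerivWithinAt.congr_of_mem (fun x hx => ?_) ht
  rw [IccExtend_of_mem zero_le_one g hx, hg]
  rfl

end Primitive

variable {E F : Type u} [NormedAddCommGroup E] [NormedSpace ℝ E]
  [NormedAddCommGroup F] [NormedSpace ℝ F] {f : ℝ × E → F} {U : Set (ℝ × E)} {B : Set E} {z : E}

theorem constCurve_mem_curvesIn (hB : ∀ s ∈ I, ∀ z ∈ B, (s, z) ∈ U) (hz : z ∈ B) :
    constCurve E z ∈ curvesIn U :=
  fun s => hB s s.2 z hz

theorem primitive_apply_one {g : C(I, F)} {φ : ℝ → F} (hg : ∀ s : I, g s = φ s) :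
    primitive F g 1 = ∫ s in (0 : ℝ)..1, φ s := by
  refine intervalIntegral.integral_congr fun s hs => ?_
  rw [Icc.coe_one, uIcc_of_le zero_le_one] at hs
  exact (IccExtend_of_mem zero_le_one g hs).trans (hg _)

theorem contDiffOn_parametric_integral (hU : IsOpen U) (hf : ContDiffOn ℝ ∞ f U)
    (hB : ∀ s ∈ I, ∀ z ∈ B, (s, z) ∈ U) :
    ContDiffOn ℝ ∞ (fun z => ∫ s in (0 : ℝ)..1, f (s, z)) B := by
  refine (((ContinuousMap.evalCLM ℝ (1 : I)).comp (primitive F)).contDiff.comp_contDiffOn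
    ((contDiffOn_timeSuperposition hU hf).comp (constCurve E).contDiff.contDiffOn
      fun z hz => constCurve_mem_curvesIn hB hz)).congr fun z hz => ?_
  exact (primitive_apply_one
    (timeSuperposition_apply hf.continuousOn (constCurve_mem_curvesIn hB hz))).symm

theorem fderiv_parametric_integral_apply (hU : IsOpen U) (hf : ContDiffOn ℝ ∞ f U)
    (hB : ∀ s ∈ I, ∀ z ∈ B, (s, z) ∈ U) (hBo : IsOpen B) (hz : z ∈ B) (u : E) :
    fderiv ℝ (fun z => ∫ s in (0 : ℝ)..1, f (s, z)) z u =
      ∫ s in (0 : ℝ)..1, fderiv ℝ f (s, z) (0, u) := by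
  have hγ := constCurve_mem_curvesIn hB hz
  have heq : (fun z => ∫ s in (0 : ℝ)..1, f (s, z)) =ᶠ[𝓝 z]
      fun z => ((ContinuousMap.evalCLM ℝ (1 : I)).comp (primitive F))
        (timeSuperposition f (constCurve E z)) := by
    filter_upwards [hBo.mem_nhds hz] with y hy
    exact (primitive_apply_one
      (timeSuperposition_apply hf.continuousOn (constCurve_mem_curvesIn hB hy))).symm
  have hderiv : HasFDerivAt (fun z => ∫ s in (0 : ℝ)..1, f (s, z)) _ z :=
    ((ContinuousLinearMap.hasFDerivAt _).comp z
      ((differentiableAt_timeSuperposition hU hf hγ).hasFDerivAt.comp z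
        (constCurve E).hasFDerivAt)).congr_of_eventuallyEq heq
  rw [hderiv.fderiv]
  exact primitive_apply_one (φ := fun s => fderiv ℝ f (s, z) (0, u))
    (fderiv_timeSuperposition_apply hU hf hγ (constCurve E u))

end Integration

section InverseFunction

variable {E F : Type*} [NormedAddCommGroup E] [NormedSpace ℝ E] [CompleteSpace E]
  [NormedAddCommGroup F] [NormedSpace ℝ F] {Φ : E → F} {U : Set E} {a : E} {e : E ≃L[ℝ] F}

theorem exists_openPartialHomeomorph_contDiffOn_symm (hU : IsOpen U) (hΦ : ContDiffOn ℝ ∞ Φ U)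
    (ha : a ∈ U) (he : HasFDerivAt Φ (e : E →L[ℝ] F) a) :
    ∃ g : OpenPartialHomeomorph E F, g = Φ ∧ a ∈ g.source ∧ g.source ⊆ U ∧
      ContDiffOn ℝ ∞ g.symm g.target := by
  have hat (x) (hx : x ∈ U) : ContDiffAt ℝ ∞ Φ x := hΦ.contDiffAt (hU.mem_nhds hx)
  have hinfty : (∞ : WithTop ℕ∞) ≠ 0 := by simp
  have hopen : IsOpen (U ∩ fderiv ℝ Φ ⁻¹' range ((↑) : (E ≃L[ℝ] F) → E →L[ℝ] F)) :=
    (hΦ.continuousOn_fderiv_of_isOpen hU (by simp)).isOpen_inter_preimage hU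
      ContinuousLinearEquiv.isOpen
  let g := ((hat a ha).toOpenPartialHomeomorph Φ he hinfty).restrOpen _ hopen
  refine ⟨g, rfl, ⟨(hat a ha).mem_toOpenPartialHomeomorph_source he hinfty, ha, e, he.fderiv.symm⟩,
    fun x hx => hx.2.1, fun y hy => ?_⟩
  obtain ⟨hyU, e', he'⟩ := (g.map_target hy).2
  have hderiv : HasFDerivAt Φ (e' : E →L[ℝ] F) (g.symm y) :=
    he' ▸ ((hat _ hyU).differentiableAt hinfty).hasFDerivAt
  exact (g.contDiffAt_symm hy hderiv (hat _ hyU)).contDiffWithinAt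

theorem exists_isDiffeoOn_image (hU : IsOpen U) (hΦ : ContDiffOn ℝ ∞ Φ U) (ha : a ∈ U)
    (he : HasFDerivAt Φ (e : E →L[ℝ] F) a) :
    ∃ V, IsOpen V ∧ a ∈ V ∧ V ⊆ U ∧ IsDiffeoOn Φ V (Φ '' V) := by
  obtain ⟨g, rfl, hag, hgU, hsymm⟩ := exists_openPartialHomeomorph_contDiffOn_symm hU hΦ ha he
  refine ⟨g.source, g.open_source, hag, hgU, ?_⟩
  rw [g.image_source_eq_target]
  exact ⟨hΦ.mono hgU, g.bijOn, g.symm, hsymm, g.invOn⟩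

end InverseFunction

section Flow

variable {E : Type u} [NormedAddCommGroup E] [NormedSpace ℝ E] {f : ℝ × E → E} {U : Set (ℝ × E)}
  {Γ : E → C(I, E)} {V : Set E} {z : E} {t : ℝ}

/-- `Γ` is a smooth flow on `V` of the time-dependent vector field `f`, whose integral curves
`Γ z` are defined for times in `[0, 1]` and have their graphs in `U`. The differential equation
with initial value `z` is encoded as an integral equation in the space of curves. -/
structure IsSmoothFlowOn (f : ℝ × E → E) (U : Set (ℝ × E)) (Γ : E → C(I, E)) (V : Set E) :
    Prop where
  isOpen : IsOpen V
  contDiffOn : ContDiffOn ℝ ∞ Γ V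
  mem_curvesIn : ∀ z ∈ V, Γ z ∈ curvesIn U
  integral_eq : ∀ z ∈ V, Γ z = constCurve E z + primitive E (timeSuperposition f (Γ z))

namespace IsSmoothFlowOn

theorem mono {V' : Set E} (h : IsSmoothFlowOn f U Γ V) (hV' : IsOpen V') (hV'V : V' ⊆ V) :
    IsSmoothFlowOn f U Γ V' :=
  ⟨hV', h.contDiffOn.mono hV'V, fun z hz => h.mem_curvesIn z (hV'V hz),
    fun z hz => h.integral_eq z (hV'V hz)⟩

theorem hasFDerivAt (h : IsSmoothFlowOn f U Γ V) (hz : z ∈ V) :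
    HasFDerivAt Γ (fderiv ℝ Γ z) z :=
  ((h.contDiffOn.contDiffAt (h.isOpen.mem_nhds hz)).differentiableAt (by simp)).hasFDerivAt

theorem fderiv_eq (h : IsSmoothFlowOn f U Γ V) (hU : IsOpen U) (hf : ContDiffOn ℝ ∞ f U)
    (hz : z ∈ V) (u : E) :
    fderiv ℝ Γ z u = constCurve E u +
      primitive E (fderiv ℝ (timeSuperposition f) (Γ z) (fderiv ℝ Γ z u)) := by
  have hf' := (differentiableAt_timeSuperposition hU hf (h.mem_curvesIn z hz)).hasFDerivAt
  have hderiv := ((constCurve E).hasFDerivAt (x := z)).add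
    ((primitive E).hasFDerivAt.comp z (hf'.comp z (h.hasFDerivAt hz)))
  have heq : Γ =ᶠ[𝓝 z] fun y => constCurve E y + primitive E (timeSuperposition f (Γ y)) := by
    filter_upwards [h.isOpen.mem_nhds hz] with y hy using h.integral_eq y hy
  exact DFunLike.congr_fun ((h.hasFDerivAt hz).unique (hderiv.congr_of_eventuallyEq heq)) u

theorem apply_zero (h : IsSmoothFlowOn f U Γ V) (hz : z ∈ V) : Γ z 0 = z :=
  apply_zero_of_eq_add_primitive (h.integral_eq z hz)

theorem fderiv_apply_zero (h : IsSmoothFlowOn f U Γ V) (hU : IsOpen U) (hf : ContDiffOn ℝ ∞ f U)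
    (hz : z ∈ V) (u : E) : fderiv ℝ Γ z u 0 = u :=
  apply_zero_of_eq_add_primitive (h.fderiv_eq hU hf hz u)

theorem hasDerivWithinAt [CompleteSpace E] (h : IsSmoothFlowOn f U Γ V) (hf : ContinuousOn f U)
    (hz : z ∈ V) (ht : t ∈ I) :
    HasDerivWithinAt (IccExtend zero_le_one (Γ z)) (f (t, Γ z ⟨t, ht⟩)) I t := by
  have := hasDerivWithinAt_of_eq_add_primitive (h.integral_eq z hz) ht
  rwa [timeSuperposition_apply hf (h.mem_curvesIn z hz)] at this

theorem hasDerivWithinAt_fderiv [CompleteSpace E] (h : IsSmoothFlowOn f U Γ V) (hU : IsOpen U)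
    (hf : ContDiffOn ℝ ∞ f U) (hz : z ∈ V) (u : E) (ht : t ∈ I) :
    HasDerivWithinAt (IccExtend zero_le_one (fderiv ℝ Γ z u))
      (fderiv ℝ f (t, Γ z ⟨t, ht⟩) (0, fderiv ℝ Γ z u ⟨t, ht⟩)) I t := by
  have := hasDerivWithinAt_of_eq_add_primitive (h.fderiv_eq hU hf hz u) ht
  rwa [fderiv_timeSuperposition_apply hU hf (h.mem_curvesIn z hz)] at this

theorem contDiffOn_apply_one (h : IsSmoothFlowOn f U Γ V) :
    ContDiffOn ℝ ∞ (fun z => Γ z 1) V :=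
  let eval : C(I, E) →L[ℝ] E := ContinuousMap.evalCLM ℝ (1 : I)
  eval.contDiff.comp_contDiffOn h.contDiffOn

theorem fderiv_apply_one (h : IsSmoothFlowOn f U Γ V) (hz : z ∈ V) (u : E) :
    fderiv ℝ (fun z => Γ z 1) z u = fderiv ℝ Γ z u 1 := by
  let eval : C(I, E) →L[ℝ] E := ContinuousMap.evalCLM ℝ (1 : I)
  have hderiv : HasFDerivAt (fun z => Γ z 1) (eval.comp (fderiv ℝ Γ z)) z :=
    eval.hasFDerivAt.comp z (h.hasFDerivAt hz)
  rw [hderiv.fderiv]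
  rfl

end IsSmoothFlowOn

theorem hasFDerivAt_timeSuperposition_zero (hU : IsOpen U) (hf : ContDiffOn ℝ ∞ f U)
    (h0U : (0 : C(I, E)) ∈ curvesIn U)
    (hf' : ∀ t ∈ I, HasFDerivAt (fun z => f (t, z)) (0 : E →L[ℝ] E) 0) :
    HasFDerivAt (timeSuperposition f) (0 : C(I, E) →L[ℝ] C(I, E)) 0 := by
  have hzero : fderiv ℝ (timeSuperposition f) (0 : C(I, E)) = 0 := by
    ext h s
    have hslice : HasFDerivAt (fun z => f (s, z))
        ((fderiv ℝ f (s, 0)).comp (.inr ℝ ℝ E)) (0 : E) :=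
      ((hf.contDiffAt (hU.mem_nhds (h0U s))).differentiableAt (by simp)).hasFDerivAt.comp 0
        (hasFDerivAt_prodMk_right _ _)
    rw [fderiv_timeSuperposition_apply hU hf h0U]
    exact DFunLike.congr_fun (hslice.unique (hf' s s.2)) (h s)
  exact hzero ▸ (differentiableAt_timeSuperposition hU hf h0U).hasFDerivAt

-- Apply the inverse function theorem in the space of curves to `γ ↦ γ - ∫ f (s, γ s) ds`.
theorem exists_isSmoothFlowOn [CompleteSpace E] (hU : IsOpen U) (hf : ContDiffOn ℝ ∞ f U)
    (h0U : (0 : C(I, E)) ∈ curvesIn U) (hf0 : ∀ t ∈ I, f (t, 0) = 0)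
    (hf' : ∀ t ∈ I, HasFDerivAt (fun z => f (t, z)) (0 : E →L[ℝ] E) 0)
    {N : Set C(I, E)} (hN : IsOpen N) (h0N : 0 ∈ N) :
    ∃ Γ V, IsSmoothFlowOn f U Γ V ∧ 0 ∈ V ∧ (∀ z ∈ V, Γ z ∈ N) ∧
      HasFDerivAt Γ (constCurve E) 0 := by
  let Φ : C(I, E) → C(I, E) := fun γ => γ - primitive E (timeSuperposition f γ)
  have hΦ : ContDiffOn ℝ ∞ Φ (curvesIn U) :=
    contDiffOn_id.sub ((primitive E).contDiff.comp_contDiffOn (contDiffOn_timeSuperposition hU hf))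
  have hΦ0 : Φ 0 = 0 := by
    have : timeSuperposition f 0 = 0 := by
      ext s
      exact (timeSuperposition_apply hf.continuousOn h0U s).trans (hf0 s s.2)
    simp [Φ, this]
  have hΦ' : HasFDerivAt Φ (ContinuousLinearEquiv.refl ℝ C(I, E) : C(I, E) →L[ℝ] C(I, E)) 0 := by
    refine ((hasFDerivAt_id (𝕜 := ℝ) (0 : C(I, E))).sub ((primitive E).hasFDerivAt.comp 0
      (hasFDerivAt_timeSuperposition_zero hU hf h0U hf'))).congr_fderiv ?_
    rw [ContinuousLinearMap.comp_zero, sub_zero]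
    rfl
  obtain ⟨g, hgΦ, h0g, hgU, hsymm⟩ := exists_openPartialHomeomorph_contDiffOn_symm
    ((isOpen_curvesIn hU).inter hN) (hΦ.mono inter_subset_left) ⟨h0U, h0N⟩ hΦ'
  have hg0 : g 0 = 0 := by rw [hgΦ, hΦ0]
  have h0target : 0 ∈ g.target := hg0 ▸ g.map_source h0g
  have hg0symm : g.symm 0 = 0 := by simpa [hg0] using g.left_inv h0g
  have hmem (z) (hz : z ∈ constCurve E ⁻¹' g.target) := hgU (g.map_target hz)
  refine ⟨fun z => g.symm (constCurve E z), constCurve E ⁻¹' g.target,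
    ⟨g.open_target.preimage (constCurve E).continuous,
      hsymm.comp (constCurve E).contDiff.contDiffOn fun z hz => hz, fun z hz => (hmem z hz).1,
      fun z hz => ?_⟩, by simpa using h0target, fun z hz => (hmem z hz).2, ?_⟩
  · have := g.right_inv hz
    rw [hgΦ] at this
    exact sub_eq_iff_eq_add.1 this
  · have hg' : HasFDerivAt g (ContinuousLinearEquiv.refl ℝ C(I, E) : C(I, E) →L[ℝ] C(I, E))
        (g.symm 0) := by
      rwa [hg0symm, hgΦ]
    have hsymm' := g.hasFDerivAt_symm h0target hg'
    rw [← map_zero (constCurve E)] at hsymm'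
    exact hsymm'.comp 0 (constCurve E).hasFDerivAt

end Flow

section ClosedForms

section Derivatives

variable {E F G H : Type*} [NormedAddCommGroup E] [NormedSpace ℝ E] [NormedAddCommGroup F]
  [NormedSpace ℝ F] [NormedAddCommGroup G] [NormedSpace ℝ G] [NormedAddCommGroup H]
  [NormedSpace ℝ H]

theorem fderiv_const_smul_add_const_smul_apply {f g : E → F} {z : E} (hf : DifferentiableAt ℝ f z)
    (hg : DifferentiableAt ℝ g z) (a b : ℝ) (u : E) :
    fderiv ℝ (fun z => a • f z + b • g z) z u = a • fderiv ℝ f z u + b • fderiv ℝ g z u := by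
  rw [((hf.hasFDerivAt.fun_const_smul a).fun_add (hg.hasFDerivAt.fun_const_smul b)).fderiv]
  rfl

theorem hasDerivWithinAt_bilinear_apply {A : E → F →L[ℝ] G →L[ℝ] H}
    {A' : E →L[ℝ] F →L[ℝ] G →L[ℝ] H} {p : ℝ → E} {a : ℝ → F} {b : ℝ → G} {p' : E} {a' : F}
    {b' : G} {S : Set ℝ} {t : ℝ} (hA : HasFDerivAt A A' (p t)) (hp : HasDerivWithinAt p p' S t)
    (ha : HasDerivWithinAt a a' S t) (hb : HasDerivWithinAt b b' S t) :
    HasDerivWithinAt (fun t => A (p t) (a t) (b t))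
      (A' p' (a t) (b t) + A (p t) a' (b t) + A (p t) (a t) b') S t := by
  have hAp : HasDerivWithinAt (A ∘ p) (A' p') S t :=
    hA.comp_hasDerivWithinAt t hp
  simpa only [Function.comp_apply, add_apply] using (hAp.clm_apply ha).clm_apply hb

end Derivatives

section Calculus

variable {E : Type*} [NormedAddCommGroup E] [NormedSpace ℝ E] {θ η : E → E →L[ℝ] E →L[ℝ] ℝ}
  {U V : Set E} {z u v w : E}

/-- `θ` is a smooth closed differential 2-form on `U`. -/
structure IsClosedSmoothFormOn (θ : E → E →L[ℝ] E →L[ℝ] ℝ) (U : Set E) : Prop where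
  contDiffOn : ContDiffOn ℝ ∞ θ U
  alternating : ∀ z ∈ U, ∀ u, θ z u u = 0
  closed : Closed2FormOn θ U

namespace IsClosedSmoothFormOn

theorem mono (hθ : IsClosedSmoothFormOn θ U) (hVU : V ⊆ U) : IsClosedSmoothFormOn θ V :=
  ⟨hθ.contDiffOn.mono hVU, fun z hz => hθ.alternating z (hVU hz),
    fun z hz => hθ.closed z (hVU hz)⟩

theorem differentiableAt (hθ : IsClosedSmoothFormOn θ U) (hU : IsOpen U) (hz : z ∈ U) :
    DifferentiableAt ℝ θ z :=
  (hθ.contDiffOn.contDiffAt (hU.mem_nhds hz)).differentiableAt (by simp)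

theorem const_smul_add_const_smul (hθ : IsClosedSmoothFormOn θ U)
    (hη : IsClosedSmoothFormOn η U) (hU : IsOpen U) (a b : ℝ) :
    IsClosedSmoothFormOn (fun z => a • θ z + b • η z) U where
  contDiffOn := (hθ.contDiffOn.const_smul a).add (hη.contDiffOn.const_smul b)
  alternating z hz u := by simp [hθ.alternating z hz, hη.alternating z hz]
  closed z hz u v w := by
    simp only [fderiv_const_smul_add_const_smul_apply (hθ.differentiableAt hU hz)
      (hη.differentiableAt hU hz) a b, add_apply, smul_apply, smul_eq_mul]
    linear_combination a * hθ.closed z hz u v w + b * hη.closed z hz u v w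

theorem sub (hθ : IsClosedSmoothFormOn θ U) (hη : IsClosedSmoothFormOn η U) (hU : IsOpen U) :
    IsClosedSmoothFormOn (fun z => θ z - η z) U := by
  simpa [sub_eq_add_neg] using hθ.const_smul_add_const_smul hη hU 1 (-1)

theorem antisymm (hθ : IsClosedSmoothFormOn θ U) (hz : z ∈ U) (u v : E) :
    θ z u v = -θ z v u := by
  have h := hθ.alternating z hz (u + v)
  simp only [map_add, add_apply, hθ.alternating z hz] at h
  linarith

theorem fderiv_antisymm (hθ : IsClosedSmoothFormOn θ U) (hU : IsOpen U) (hz : z ∈ U)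
    (w u v : E) : fderiv ℝ θ z w u v = -fderiv ℝ θ z w v u := by
  have hderiv (u v : E) : HasFDerivAt (fun y => θ y u v) _ z :=
    ((hθ.differentiableAt hU hz).hasFDerivAt.clm_apply (hasFDerivAt_const u z)).clm_apply
      (hasFDerivAt_const v z)
  have heq : (fun y => θ y u v) =ᶠ[𝓝 z] fun y => -θ y v u := by
    filter_upwards [hU.mem_nhds hz] with y hy using hθ.antisymm hy u v
  simpa using DFunLike.congr_fun
    ((hderiv u v).unique ((hderiv v u).neg.congr_of_eventuallyEq heq)) w

theorem fderiv_sub_fderiv_swap (hθ : IsClosedSmoothFormOn θ U) (hU : IsOpen U) (hz : z ∈ U)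
    (u v w : E) : fderiv ℝ θ z u w v - fderiv ℝ θ z v w u = fderiv ℝ θ z w u v := by
  linear_combination hθ.closed z hz u w v - hθ.fderiv_antisymm hU hz v w u
    - hθ.fderiv_antisymm hU hz w u v

end IsClosedSmoothFormOn

/-- The exterior derivative of a 1-form, evaluated on a pair of vectors. -/
def extDerivOneForm (l : E → E →L[ℝ] ℝ) (z u v : E) : ℝ := fderiv ℝ l z u v - fderiv ℝ l z v u

/-- The Lie derivative of a 2-form along a vector field with value `x` and derivative `x'` at the
point `z`, evaluated on a pair of vectors. -/
def lieDeriv (θ : E → E →L[ℝ] E →L[ℝ] ℝ) (x : E) (x' : E →L[ℝ] E) (z u v : E) : ℝ :=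
  fderiv ℝ θ z x u v + θ z (x' u) v + θ z u (x' v)

theorem extDerivOneForm_congr {l l' : E → E →L[ℝ] ℝ} (h : l =ᶠ[𝓝 z] l') (u v : E) :
    extDerivOneForm l z u v = extDerivOneForm l' z u v := by
  rw [extDerivOneForm, extDerivOneForm, h.fderiv_eq]

theorem extDerivOneForm_neg (l : E → E →L[ℝ] ℝ) (z u v : E) :
    extDerivOneForm (fun z => -l z) z u v = -extDerivOneForm l z u v := by
  simp only [extDerivOneForm, fderiv_fun_neg, neg_apply]
  ring

-- Cartan's formula `d (ι_ξ θ) = L_ξ θ` for a closed form `θ`.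
theorem extDerivOneForm_apply_field (hθ : IsClosedSmoothFormOn θ U) (hU : IsOpen U) (hz : z ∈ U)
    {ξ : E → E} {ξ' : E →L[ℝ] E} (hξ : HasFDerivAt ξ ξ' z) (u v : E) :
    extDerivOneForm (fun y => θ y (ξ y)) z u v = lieDeriv θ (ξ z) ξ' z u v := by
  have hderiv : HasFDerivAt (fun y => θ y (ξ y)) _ z :=
    (hθ.differentiableAt hU hz).hasFDerivAt.clm_apply hξ
  rw [extDerivOneForm, lieDeriv, hderiv.fderiv, ← hθ.fderiv_sub_fderiv_swap hU hz,
    hθ.antisymm hz u]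
  simp only [add_apply, ContinuousLinearMap.comp_apply,
    ContinuousLinearMap.flip_apply]
  ring

end Calculus

end ClosedForms

section Poincare

variable {E : Type u} [NormedAddCommGroup E] [NormedSpace ℝ E] {π : E →L[ℝ] E}

/-- The linear retraction `z ↦ π z + s (z - π z)`, from `π` at `s = 0` to the identity at
`s = 1`. -/
def retraction (π : E →L[ℝ] E) (s : ℝ) : E →L[ℝ] E := π + s • (.id ℝ E - π)

theorem retraction_apply (π : E →L[ℝ] E) (s : ℝ) (z : E) :
    retraction π s z = π z + s • (z - π z) :=
  rfl

theorem retraction_apply_sub (hπ : π.comp π = π) (s : ℝ) (z : E) :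
    retraction π s z - π (retraction π s z) = s • (z - π z) := by
  have hππ : π (π z) = π z := DFunLike.congr_fun hπ z
  simp [retraction_apply, hππ]

theorem norm_retraction_le {s : ℝ} (hs : s ∈ I) :
    ‖retraction π s‖ ≤ ‖π‖ + ‖.id ℝ E - π‖ := by
  refine (norm_add_le _ _).trans (add_le_add_right ?_ _)
  rw [norm_smul, Real.norm_of_nonneg hs.1]
  exact mul_le_of_le_one_left (norm_nonneg _) hs.2

theorem hasDerivAt_retraction_apply (π : E →L[ℝ] E) (z : E) (s : ℝ) :
    HasDerivAt (fun s => retraction π s z) (z - π z) s := by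
  simpa [retraction_apply] using ((hasDerivAt_id s).smul_const (z - π z)).const_add (π z)

theorem contDiff_retraction (π : E →L[ℝ] E) : ContDiff ℝ ∞ (retraction π) :=
  contDiff_const.add (contDiff_id.smul contDiff_const)

theorem exists_isOpen_mapsTo_retraction (hπ : π.comp π = π) {N : Set E} (hN : N ∈ 𝓝 0) :
    ∃ B ⊆ N, IsOpen B ∧ 0 ∈ B ∧ ∀ s ∈ I, MapsTo (retraction π s) B B := by
  obtain ⟨r, hr, hrN⟩ := Metric.mem_nhds_iff.1 hN
  refine ⟨{z | ‖π z‖ < r / 2 ∧ ‖z - π z‖ < r / 2}, fun z hz => hrN ?_,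
    .and (isOpen_lt (by fun_prop) continuous_const) (isOpen_lt (by fun_prop) continuous_const),
    by simpa using half_pos hr, fun s hs z hz => ⟨?_, ?_⟩⟩
  · rw [mem_ball_zero_iff]
    linarith [norm_le_norm_add_norm_sub' z (π z), hz.1, hz.2]
  · have hππ : π (π z) = π z := DFunLike.congr_fun hπ z
    simpa [retraction_apply, hππ] using hz.1
  · rw [retraction_apply_sub hπ, norm_smul, Real.norm_of_nonneg hs.1]
    exact (mul_le_of_le_one_left (norm_nonneg _) hs.2).trans_lt hz.2

/-- The pullback by `retraction π s` of the contraction of `η` with the velocity of the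
retraction. -/
def homotopyIntegrand (π : E →L[ℝ] E) (η : E → E →L[ℝ] E →L[ℝ] ℝ) (p : ℝ × E) : E →L[ℝ] ℝ :=
  (η (retraction π p.1 p.2) (p.2 - π p.2)).comp (retraction π p.1)

/-- The homotopy operator of the Poincaré lemma for 2-forms, relative to the linear retraction
onto the range of the projection `π`. -/
def homotopyOperator (π : E →L[ℝ] E) (η : E → E →L[ℝ] E →L[ℝ] ℝ) (z : E) : E →L[ℝ] ℝ :=
  ∫ s in (0 : ℝ)..1, homotopyIntegrand π η (s, z)

variable {η : E → E →L[ℝ] E →L[ℝ] ℝ} {B : Set E} {z : E}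

theorem norm_homotopyOperator_le {M : ℝ} (hM : ∀ s ∈ I, ‖η (retraction π s z)‖ ≤ M) :
    ‖homotopyOperator π η z‖ ≤ M * ‖z - π z‖ * (‖π‖ + ‖.id ℝ E - π‖) := by
  have hM0 : 0 ≤ M := (norm_nonneg (η (retraction π 0 z))).trans (hM 0 ⟨le_rfl, zero_le_one⟩)
  have hbound (s : ℝ) (hs : s ∈ uIoc 0 1) : ‖homotopyIntegrand π η (s, z)‖ ≤
      M * ‖z - π z‖ * (‖π‖ + ‖.id ℝ E - π‖) := by
    rw [uIoc_of_le zero_le_one] at hs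
    have hsI : s ∈ I := Ioc_subset_Icc_self hs
    calc ‖homotopyIntegrand π η (s, z)‖
      _ ≤ ‖η (retraction π s z) (z - π z)‖ * ‖retraction π s‖ :=
        ContinuousLinearMap.opNorm_comp_le _ _
      _ ≤ ‖η (retraction π s z)‖ * ‖z - π z‖ * ‖retraction π s‖ := by
        gcongr
        exact ContinuousLinearMap.le_opNorm _ _
      _ ≤ M * ‖z - π z‖ * (‖π‖ + ‖.id ℝ E - π‖) := by
        gcongr
        exacts [hM s hsI, norm_retraction_le hsI]
  simpa [homotopyOperator] using intervalIntegral.norm_integral_le_of_norm_le_const hbound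

theorem continuous_retraction_apply (π : E →L[ℝ] E) :
    Continuous fun p : ℝ × E => retraction π p.1 p.2 :=
  ((contDiff_retraction π).continuous.comp continuous_fst).clm_apply continuous_snd

theorem contDiffOn_homotopyIntegrand (hη : ContDiffOn ℝ ∞ η B) :
    ContDiffOn ℝ ∞ (homotopyIntegrand π η) {p | retraction π p.1 p.2 ∈ B} := by
  have hr : ContDiff ℝ ∞ fun p : ℝ × E => retraction π p.1 :=
    (contDiff_retraction π).comp contDiff_fst
  have hηr : ContDiffOn ℝ ∞ (fun p : ℝ × E => η (retraction π p.1 p.2))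
      {p | retraction π p.1 p.2 ∈ B} :=
    hη.comp (hr.clm_apply contDiff_snd).contDiffOn fun _ hp => hp
  exact (hηr.clm_apply (contDiff_snd.sub (π.contDiff.comp contDiff_snd)).contDiffOn).clm_comp
    hr.contDiffOn

theorem contDiffOn_homotopyOperator (hB : IsOpen B) (hη : ContDiffOn ℝ ∞ η B)
    (hπB : ∀ s ∈ I, MapsTo (retraction π s) B B) :
    ContDiffOn ℝ ∞ (homotopyOperator π η) B :=
  contDiffOn_parametric_integral (hB.preimage (continuous_retraction_apply π))
    (contDiffOn_homotopyIntegrand hη) hπB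

theorem fderiv_homotopyIntegrand_apply (hB : IsOpen B) (hη : ContDiffOn ℝ ∞ η B) {s : ℝ}
    (hz : retraction π s z ∈ B) (u v : E) :
    fderiv ℝ (homotopyIntegrand π η) (s, z) (0, u) v =
      fderiv ℝ η (retraction π s z) (retraction π s u) (z - π z) (retraction π s v) +
        η (retraction π s z) (u - π u) (retraction π s v) := by
  have hη' : DifferentiableAt ℝ η (retraction π s z) :=
    (hη.contDiffAt (hB.mem_nhds hz)).differentiableAt (by simp)
  have hintegrand : DifferentiableAt ℝ (homotopyIntegrand π η) (s, z) :=
    ((contDiffOn_homotopyIntegrand hη).contDiffAt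
      ((hB.preimage (continuous_retraction_apply π)).mem_nhds hz)).differentiableAt (by simp)
  have hslice : HasFDerivAt (fun y => homotopyIntegrand π η (s, y) v) _ z :=
    (hintegrand.hasFDerivAt.comp z (hasFDerivAt_prodMk_right s z)).clm_apply
      (hasFDerivAt_const v z)
  have hexplicit : HasFDerivAt
      (fun y => η (retraction π s y) ((.id ℝ E - π : E →L[ℝ] E) y) (retraction π s v)) _ z :=
    ((hη'.hasFDerivAt.comp z (retraction π s).hasFDerivAt).clm_apply
      (ContinuousLinearMap.hasFDerivAt _)).clm_apply (hasFDerivAt_const _ z)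
  simpa [add_comm] using DFunLike.congr_fun (hslice.unique hexplicit) u

theorem continuousOn_fderiv_homotopyIntegrand (hB : IsOpen B) (hη : ContDiffOn ℝ ∞ η B)
    (hz : ∀ s ∈ I, retraction π s z ∈ B) (u : E) :
    ContinuousOn (fun s => fderiv ℝ (homotopyIntegrand π η) (s, z) (0, u)) I :=
  have hcont := (contDiffOn_homotopyIntegrand (π := π) hη).continuousOn_fderiv_of_isOpen
    (hB.preimage (continuous_retraction_apply π)) (by simp)
  (hcont.comp (f := fun s => (s, z)) (by fun_prop) hz).clm_apply continuousOn_const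

theorem fderiv_homotopyOperator_apply (hB : IsOpen B) (hη : ContDiffOn ℝ ∞ η B)
    (hπB : ∀ s ∈ I, MapsTo (retraction π s) B B) (hz : z ∈ B) (u v : E) :
    fderiv ℝ (homotopyOperator π η) z u v =
      ∫ s in (0 : ℝ)..1, fderiv ℝ (homotopyIntegrand π η) (s, z) (0, u) v := by
  have hcont := continuousOn_fderiv_homotopyIntegrand hB hη (fun s hs => hπB s hs hz) u
  rw [← ContinuousLinearMap.intervalIntegral_apply
    (hcont.intervalIntegrable_of_Icc zero_le_one)]
  exact DFunLike.congr_fun (fderiv_parametric_integral_apply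
    (hB.preimage (continuous_retraction_apply π)) (contDiffOn_homotopyIntegrand hη) hπB hB hz u) v

theorem extDerivOneForm_homotopyOperator (hB : IsOpen B) (hη : IsClosedSmoothFormOn η B)
    (hπB : ∀ s ∈ I, MapsTo (retraction π s) B B) (hz : z ∈ B) (u v : E) :
    extDerivOneForm (homotopyOperator π η) z u v = η z u v - η (π z) (π u) (π v) := by
  have hderiv (s : ℝ) (hs : s ∈ uIcc 0 1) : HasDerivAt
      (fun s => η (retraction π s z) (retraction π s u) (retraction π s v))
      (fderiv ℝ (homotopyIntegrand π η) (s, z) (0, u) v -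
        fderiv ℝ (homotopyIntegrand π η) (s, z) (0, v) u) s := by
    rw [uIcc_of_le zero_le_one] at hs
    have hsz : retraction π s z ∈ B := hπB s hs hz
    have h := hasDerivWithinAt_bilinear_apply
      (hη.differentiableAt hB hsz).hasFDerivAt
      (hasDerivAt_retraction_apply π z s).hasDerivWithinAt
      (hasDerivAt_retraction_apply π u s).hasDerivWithinAt
      (hasDerivAt_retraction_apply π v s).hasDerivWithinAt (S := univ)
    rw [hasDerivWithinAt_univ, ← hη.fderiv_sub_fderiv_swap hB hsz] at h
    rw [fderiv_homotopyIntegrand_apply hB hη.contDiffOn hsz,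
      fderiv_homotopyIntegrand_apply hB hη.contDiffOn hsz]
    refine h.congr_deriv ?_
    rw [hη.antisymm hsz (v - π v)]
    ring
  have hint (u v : E) : IntervalIntegrable
      (fun s => fderiv ℝ (homotopyIntegrand π η) (s, z) (0, u) v) MeasureTheory.volume 0 1 :=
    ((continuousOn_fderiv_homotopyIntegrand hB hη.contDiffOn (fun s hs => hπB s hs hz) u).clm_apply
      continuousOn_const).intervalIntegrable_of_Icc zero_le_one
  rw [extDerivOneForm, fderiv_homotopyOperator_apply hB hη.contDiffOn hπB hz,
    fderiv_homotopyOperator_apply hB hη.contDiffOn hπB hz,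
    ← intervalIntegral.integral_sub (hint u v) (hint v u),
    intervalIntegral.integral_eq_sub_of_hasDerivAt hderiv ((hint u v).sub (hint v u))]
  simp [retraction_apply]

end Poincare

section Displacement

variable {E F : Type*} [NormedAddCommGroup E] [NormedSpace ℝ E] [NormedAddCommGroup F]
  [NormedSpace ℝ F] {R : E →L[ℝ] F} {K p : ℝ}

theorem isLittleO_norm_rpow (hp : 1 < p) : (fun z => ‖R z‖ ^ p) =o[𝓝 0] fun z : E => z := by
  have hp0 : p ≠ 0 := by linarith
  have hlin : (fun z => ‖R z‖) =O[𝓝 0] fun z : E => z := (R.isBigO_id (𝓝 0)).norm_left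
  have hsmall : (fun z => ‖R z‖ ^ (p - 1)) =o[𝓝 0] fun _ : E => (1 : ℝ) := by
    have hcont : ContinuousAt (fun z => ‖R z‖ ^ (p - 1)) 0 :=
      R.continuous.norm.continuousAt.rpow_const (Or.inr (by linarith))
    rw [isLittleO_one_iff]
    simpa [ContinuousAt, Real.zero_rpow (sub_pos.2 hp).ne'] using hcont
  have hsplit (z : E) : ‖R z‖ ^ p = ‖R z‖ ^ (p - 1) * ‖R z‖ := by
    rw [← Real.rpow_add_one' (norm_nonneg _) (by simpa using hp0), sub_add_cancel]
  refine IsLittleO.of_norm_right ?_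
  simpa only [hsplit, one_mul] using hsmall.mul_isBigO hlin.norm_right

theorem hasFDerivAt_zero_of_isBigO_norm_rpow {g : E → E} (hp : 1 < p)
    (hg : g =O[𝓝 0] fun z => ‖R z‖ ^ p) : HasFDerivAt g (0 : E →L[ℝ] E) 0 := by
  have hg0 : g 0 = 0 :=
    hg.eq_zero_imp.self_of_nhds (by simpa using Real.zero_rpow (by linarith))
  rw [hasFDerivAt_iff_isLittleO_nhds_zero]
  simpa [hg0] using hg.trans_isLittleO (isLittleO_norm_rpow hp)

variable {α : ℝ} {g γ : C(I, E)} {z : E}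

/-- The curves along which `R` is so small that a velocity bounded by `K * ‖R γ‖ ^ (α + 1)` cannot
double `‖R γ‖` in unit time. -/
def slowCurves (R : E →L[ℝ] F) (K α : ℝ) : Set C(I, E) :=
  {γ | ‖R‖ * K * ‖R.compLeftContinuous ℝ I γ‖ ^ α < 1 / 2}

theorem isOpen_slowCurves (hα : 0 ≤ α) : IsOpen (slowCurves R K α) :=
  isOpen_lt (continuous_const.mul (((R.compLeftContinuous ℝ I).continuous.norm).rpow_const
    fun _ => Or.inr hα)) continuous_const

theorem zero_mem_slowCurves (hα : 0 < α) : 0 ∈ slowCurves R K α := by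
  simp [slowCurves, Real.zero_rpow hα.ne']

theorem norm_sub_constCurve_le (hα : 0 < α) (hK : 0 ≤ K)
    (hγ : γ = constCurve E z + primitive E g)
    (hg : ∀ s, ‖g s‖ ≤ K * ‖R (γ s)‖ ^ (α + 1)) (hslow : γ ∈ slowCurves R K α) :
    ‖γ - constCurve E z‖ ≤ K * 2 ^ (α + 1) * ‖R z‖ ^ (α + 1) := by
  have hα1 : α + 1 ≠ 0 := by linarith
  set r := ‖R.compLeftContinuous ℝ I γ‖
  have hr0 : 0 ≤ r := norm_nonneg _
  have hle_r (s : I) : ‖R (γ s)‖ ≤ r := (R.compLeftContinuous ℝ I γ).norm_coe_le_norm s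
  have hdisp : ‖γ - constCurve E z‖ ≤ K * r ^ (α + 1) := by
    rw [sub_eq_of_eq_add' hγ]
    refine (norm_primitive_le g).trans ((ContinuousMap.norm_le _ (by positivity)).2 fun s => ?_)
    exact (hg s).trans (by gcongr; exact hle_r s)
  have hr_le : r ≤ 2 * ‖R z‖ := by
    have hgrowth : r ≤ ‖R z‖ + ‖R‖ * (K * r ^ (α + 1)) := by
      refine (ContinuousMap.norm_le _ (by positivity)).2 fun s => ?_
      have hs : ‖γ s - z‖ ≤ K * r ^ (α + 1) :=
        ((γ - constCurve E z).norm_coe_le_norm s).trans hdisp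
      calc ‖R (γ s)‖
        _ = ‖R z + R (γ s - z)‖ := by rw [map_sub, add_sub_cancel]
        _ ≤ ‖R z‖ + ‖R‖ * (K * r ^ (α + 1)) :=
          (norm_add_le _ _).trans (by gcongr; exact R.le_opNorm_of_le hs)
    have hhalf : ‖R‖ * (K * r ^ (α + 1)) ≤ r / 2 := by
      rw [Real.rpow_add' hr0 hα1, Real.rpow_one]
      nlinarith [mul_le_mul_of_nonneg_right (le_of_lt hslow) hr0]
    linarith
  calc ‖γ - constCurve E z‖
    _ ≤ K * (2 * ‖R z‖) ^ (α + 1) := hdisp.trans (by gcongr)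
    _ = K * 2 ^ (α + 1) * ‖R z‖ ^ (α + 1) := by
      rw [Real.mul_rpow zero_le_two (norm_nonneg _), mul_assoc]

end Displacement

section FlatField

variable {E : Type u} {F : Type*} [NormedAddCommGroup E] [NormedSpace ℝ E]
  [NormedAddCommGroup F] [NormedSpace ℝ F] {R : E →L[ℝ] F} {f : ℝ × E → E} {U : Set (ℝ × E)}
  {Γ : E → C(I, E)} {V : Set E} {K α : ℝ} {z : E}

theorem IsSmoothFlowOn.norm_apply_one_sub_le (hΓ : IsSmoothFlowOn f U Γ V)
    (hf : ContinuousOn f U) (hα : 0 < α) (hK : 0 ≤ K)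
    (hfR : ∀ t ∈ I, ∀ z, (t, z) ∈ U → ‖f (t, z)‖ ≤ K * ‖R z‖ ^ (α + 1)) (hz : z ∈ V)
    (hslow : Γ z ∈ slowCurves R K α) :
    ‖Γ z 1 - z‖ ≤ K * 2 ^ (α + 1) * ‖R z‖ ^ (α + 1) := by
  have hmem := hΓ.mem_curvesIn z hz
  have hspeed (s : I) : ‖timeSuperposition f (Γ z) s‖ ≤ K * ‖R (Γ z s)‖ ^ (α + 1) := by
    rw [timeSuperposition_apply hf hmem]
    exact hfR s s.2 _ (hmem s)
  exact ((Γ z - constCurve E z).norm_coe_le_norm 1).trans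
    (norm_sub_constCurve_le hα hK (hΓ.integral_eq z hz) hspeed hslow)

theorem exists_isSmoothFlowOn_isDiffeoOn [CompleteSpace E] (hU : IsOpen U)
    (hf : ContDiffOn ℝ ∞ f U) (h0U : (0 : C(I, E)) ∈ curvesIn U) (hα : 0 < α) (hK : 0 ≤ K)
    (hfR : ∀ t ∈ I, ∀ z, (t, z) ∈ U → ‖f (t, z)‖ ≤ K * ‖R z‖ ^ (α + 1)) :
    ∃ Γ V, IsSmoothFlowOn f U Γ V ∧ 0 ∈ V ∧
      IsDiffeoOn (fun z => Γ z 1) V ((fun z => Γ z 1) '' V) ∧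
      ∀ z ∈ V, ‖Γ z 1 - z‖ ≤ K * 2 ^ (α + 1) * ‖R z‖ ^ (α + 1) := by
  have hα1 : α + 1 ≠ 0 := by linarith
  have hf0 (t : ℝ) (ht : t ∈ I) : f (t, 0) = 0 := by
    simpa [Real.zero_rpow hα1] using hfR t ht 0 (h0U ⟨t, ht⟩)
  have hf' (t : ℝ) (ht : t ∈ I) : HasFDerivAt (fun z => f (t, z)) (0 : E →L[ℝ] E) 0 := by
    refine hasFDerivAt_zero_of_isBigO_norm_rpow (R := R) (p := α + 1) (by linarith) (.of_bound K ?_)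
    filter_upwards [(hU.preimage (Continuous.prodMk_right t)).mem_nhds (h0U ⟨t, ht⟩)] with z hz
    simpa [Real.abs_rpow_of_nonneg] using hfR t ht z hz
  obtain ⟨Γ, V, hΓ, h0V, hslow, hΓ'⟩ := exists_isSmoothFlowOn hU hf h0U hf0 hf'
    (isOpen_slowCurves (R := R) (K := K) hα.le) (zero_mem_slowCurves hα)
  let eval : C(I, E) →L[ℝ] E := ContinuousMap.evalCLM ℝ (1 : I)
  have hψ' : HasFDerivAt (fun z => Γ z 1) (ContinuousLinearEquiv.refl ℝ E : E →L[ℝ] E) 0 :=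
    eval.hasFDerivAt.comp 0 hΓ'
  obtain ⟨V', hV', h0V', hV'V, hdiffeo⟩ :=
    exists_isDiffeoOn_image hΓ.isOpen hΓ.contDiffOn_apply_one h0V hψ'
  exact ⟨Γ, V', hΓ.mono hV' hV'V, h0V', hdiffeo, fun z hz =>
    hΓ.norm_apply_one_sub_le hf.continuousOn hα hK hfR (hV'V hz) (hslow z (hV'V hz))⟩

end FlatField

section Perturbation

variable {X F G : Type*} [TopologicalSpace X] [NormedAddCommGroup F] [NormedSpace ℝ F]
  [NormedAddCommGroup G] [NormedSpace ℝ G]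

theorem eventually_forall_combination_mem {f g : X → F} {x : X} {S : Set F} (hS : S ∈ 𝓝 (f x))
    (hf : ContinuousAt f x) (hg : ContinuousAt g x) (heq : g x = f x) :
    ∀ᶠ y in 𝓝 x, ∀ t ∈ I, (1 - t) • f y + t • g y ∈ S := by
  obtain ⟨r, hr, hrS⟩ := Metric.mem_nhds_iff.1 hS
  have hball := Metric.ball_mem_nhds (f x) hr
  have hball' : Metric.ball (f x) r ∈ 𝓝 (g x) := heq ▸ hball
  filter_upwards [hf hball, hg hball'] with y hfy hgy t ht
  exact hrS (convex_ball _ _ hfy hgy (sub_nonneg.2 ht.2) ht.1 (sub_add_cancel 1 t))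

theorem exists_eventually_norm_inverse_le [CompleteSpace F] {A : F →L[ℝ] G}
    (hA : A.IsInvertible) : ∃ M, ∀ᶠ A' in 𝓝 A, A'.IsInvertible ∧ ‖A'.inverse‖ ≤ M := by
  have hcont : ContinuousAt (fun A : F →L[ℝ] G => ‖A.inverse‖) A :=
    (hA.contDiffAt_map_inverse (n := 0)).continuousAt.norm
  have hinv : ∀ᶠ A' in 𝓝 A, A'.IsInvertible := ContinuousLinearEquiv.isOpen.mem_nhds hA
  exact ⟨‖A.inverse‖ + 1,
    hinv.and ((hcont.eventually_lt_const (lt_add_one _)).mono fun _ h => h.le)⟩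

end Perturbation

section Moser

variable {E : Type u} [NormedAddCommGroup E] [NormedSpace ℝ E] {ω₀ ω₁ : E → E →L[ℝ] E →L[ℝ] ℝ}
  {l : E → E →L[ℝ] ℝ} {B : Set E} {z : E} {t : ℝ}

/-- The segment `ωₜ = (1 - t) ω₀ + t ω₁` of 2-forms. -/
def moserPath (ω₀ ω₁ : E → E →L[ℝ] E →L[ℝ] ℝ) (t : ℝ) (z : E) : E →L[ℝ] E →L[ℝ] ℝ :=
  (1 - t) • ω₀ z + t • ω₁ z

/-- The points `(t, z)`, with `z` in `B`, at which `ωₜ` is non-degenerate. -/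
def moserDomain (ω₀ ω₁ : E → E →L[ℝ] E →L[ℝ] ℝ) (B : Set E) : Set (ℝ × E) :=
  {p | p.2 ∈ B ∧ (moserPath ω₀ ω₁ p.1 p.2).IsInvertible}

/-- The time-dependent vector field `ξ` with `ωₜ(ξ, ·) = -l`. Outside `moserDomain` it is `0`, the
junk value of `ContinuousLinearMap.inverse`. -/
def moserField (ω₀ ω₁ : E → E →L[ℝ] E →L[ℝ] ℝ) (l : E → E →L[ℝ] ℝ) (p : ℝ × E) : E :=
  -(moserPath ω₀ ω₁ p.1 p.2).inverse (l p.2)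

theorem moserPath_apply_moserField (h : (t, z) ∈ moserDomain ω₀ ω₁ B) :
    moserPath ω₀ ω₁ t z (moserField ω₀ ω₁ l (t, z)) = -l z := by
  rw [moserField, map_neg, h.2.self_apply_inverse]

theorem norm_moserField_le {M : ℝ} (hM : ‖(moserPath ω₀ ω₁ t z).inverse‖ ≤ M) :
    ‖moserField ω₀ ω₁ l (t, z)‖ ≤ M * ‖l z‖ := by
  rw [moserField, norm_neg]
  exact ContinuousLinearMap.le_of_opNorm_le _ hM _

theorem contDiffOn_moserPath (h₀ : ContDiffOn ℝ ∞ ω₀ B) (h₁ : ContDiffOn ℝ ∞ ω₁ B) :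
    ContDiffOn ℝ ∞ (fun p : ℝ × E => moserPath ω₀ ω₁ p.1 p.2) {p | p.2 ∈ B} := by
  have hcomp {θ : E → E →L[ℝ] E →L[ℝ] ℝ} (hθ : ContDiffOn ℝ ∞ θ B) :
      ContDiffOn ℝ ∞ (fun p : ℝ × E => θ p.2) {p | p.2 ∈ B} :=
    hθ.comp contDiffOn_snd fun _ hp => hp
  exact ((contDiffOn_const.sub contDiffOn_fst).smul (hcomp h₀)).add
    (contDiffOn_fst.smul (hcomp h₁))

theorem isOpen_moserDomain [CompleteSpace E] (hB : IsOpen B) (h₀ : ContDiffOn ℝ ∞ ω₀ B)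
    (h₁ : ContDiffOn ℝ ∞ ω₁ B) : IsOpen (moserDomain ω₀ ω₁ B) :=
  (contDiffOn_moserPath h₀ h₁).continuousOn.isOpen_inter_preimage (hB.preimage continuous_snd)
    ContinuousLinearEquiv.isOpen

theorem contDiffOn_moserField [CompleteSpace E] (h₀ : ContDiffOn ℝ ∞ ω₀ B)
    (h₁ : ContDiffOn ℝ ∞ ω₁ B) (hl : ContDiffOn ℝ ∞ l B) :
    ContDiffOn ℝ ∞ (moserField ω₀ ω₁ l) (moserDomain ω₀ ω₁ B) := by
  have hinv : ContDiffOn ℝ ∞ (fun p : ℝ × E => (moserPath ω₀ ω₁ p.1 p.2).inverse)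
      (moserDomain ω₀ ω₁ B) := fun p hp =>
    ContDiffAt.comp_contDiffWithinAt (g := ContinuousLinearMap.inverse) p
      hp.2.contDiffAt_map_inverse (((contDiffOn_moserPath h₀ h₁).mono fun _ hq => hq.1) p hp)
  exact (hinv.clm_apply (hl.comp contDiffOn_snd fun _ hp => hp.1)).neg

theorem lieDeriv_moserPath (h₀ : DifferentiableAt ℝ ω₀ z) (h₁ : DifferentiableAt ℝ ω₁ z)
    (x : E) (x' : E →L[ℝ] E) (u v : E) : lieDeriv (moserPath ω₀ ω₁ t) x x' z u v =
      (1 - t) * lieDeriv ω₀ x x' z u v + t * lieDeriv ω₁ x x' z u v := by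
  have hderiv := fderiv_const_smul_add_const_smul_apply h₀ h₁ (1 - t) t x
  change fderiv ℝ (moserPath ω₀ ω₁ t) z x = _ at hderiv
  simp only [lieDeriv, hderiv, moserPath, add_apply, smul_apply, smul_eq_mul]
  ring

-- Moser's equation: `L_ξ ωₜ = d (ι_ξ ωₜ) = -dl` cancels the `t`-derivative `ω₁ - ω₀` of `ωₜ`.
theorem lieDeriv_moserField [CompleteSpace E] (hB : IsOpen B) (h₀ : IsClosedSmoothFormOn ω₀ B)
    (h₁ : IsClosedSmoothFormOn ω₁ B) (hl : ContDiffOn ℝ ∞ l B)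
    (hp : (t, z) ∈ moserDomain ω₀ ω₁ B) (u v : E) :
    lieDeriv (moserPath ω₀ ω₁ t) (moserField ω₀ ω₁ l (t, z))
      ((fderiv ℝ (moserField ω₀ ω₁ l) (t, z)).comp (.inr ℝ ℝ E)) z u v =
        -extDerivOneForm l z u v := by
  have hopen := isOpen_moserDomain hB h₀.contDiffOn h₁.contDiffOn
  have hfield : HasFDerivAt (fun y => moserField ω₀ ω₁ l (t, y)) _ z :=
    (((contDiffOn_moserField h₀.contDiffOn h₁.contDiffOn hl).contDiffAt
      (hopen.mem_nhds hp)).differentiableAt (by simp)).hasFDerivAt.comp z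
        (hasFDerivAt_prodMk_right t z)
  have hcontract : (fun y => moserPath ω₀ ω₁ t y (moserField ω₀ ω₁ l (t, y))) =ᶠ[𝓝 z]
      fun y => -l y := by
    filter_upwards [(hopen.preimage (Continuous.prodMk_right t)).mem_nhds hp] with y hy
    exact moserPath_apply_moserField hy
  have hpath : IsClosedSmoothFormOn (moserPath ω₀ ω₁ t) B :=
    h₀.const_smul_add_const_smul h₁ hB (1 - t) t
  rw [← extDerivOneForm_apply_field hpath hB hp.1 hfield, ← extDerivOneForm_neg]
  exact extDerivOneForm_congr hcontract u v

theorem hasDerivWithinAt_moserPath_apply {p a b : ℝ → E} {x : E} {x' : E →L[ℝ] E} {S : Set ℝ}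
    (h₀ : DifferentiableAt ℝ ω₀ (p t)) (h₁ : DifferentiableAt ℝ ω₁ (p t))
    (hp : HasDerivWithinAt p x S t) (ha : HasDerivWithinAt a (x' (a t)) S t)
    (hb : HasDerivWithinAt b (x' (b t)) S t) :
    HasDerivWithinAt (fun t => moserPath ω₀ ω₁ t (p t) (a t) (b t))
      (ω₁ (p t) (a t) (b t) - ω₀ (p t) (a t) (b t) +
        lieDeriv (moserPath ω₀ ω₁ t) x x' (p t) (a t) (b t)) S t := by
  have hderiv₀ : HasDerivWithinAt (fun t => ω₀ (p t) (a t) (b t))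
      (lieDeriv ω₀ x x' (p t) (a t) (b t)) S t :=
    hasDerivWithinAt_bilinear_apply h₀.hasFDerivAt hp ha hb
  have hderiv₁ : HasDerivWithinAt (fun t => ω₁ (p t) (a t) (b t))
      (lieDeriv ω₁ x x' (p t) (a t) (b t)) S t :=
    hasDerivWithinAt_bilinear_apply h₁.hasFDerivAt hp ha hb
  have hid := hasDerivWithinAt_id t S
  refine (((hid.const_sub 1).mul hderiv₀).add (hid.mul hderiv₁)).congr_deriv ?_
  rw [lieDeriv_moserPath h₀ h₁]
  simp only [id_eq]
  ring

variable {Γ : E → C(I, E)} {V : Set E}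

theorem IsSmoothFlowOn.pullback_eq [CompleteSpace E]
    (hΓ : IsSmoothFlowOn (moserField ω₀ ω₁ l) (moserDomain ω₀ ω₁ B) Γ V) (hB : IsOpen B)
    (h₀ : IsClosedSmoothFormOn ω₀ B) (h₁ : IsClosedSmoothFormOn ω₁ B) (hl : ContDiffOn ℝ ∞ l B)
    (hdl : ∀ z ∈ B, ∀ u v, extDerivOneForm l z u v = ω₁ z u v - ω₀ z u v) (hz : z ∈ V) (u v : E) :
    ω₁ (Γ z 1) (fderiv ℝ Γ z u 1) (fderiv ℝ Γ z v 1) = ω₀ z u v := by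
  have hopen := isOpen_moserDomain hB h₀.contDiffOn h₁.contDiffOn
  have hsmooth := contDiffOn_moserField h₀.contDiffOn h₁.contDiffOn hl
  let p := IccExtend zero_le_one (Γ z)
  let a := IccExtend zero_le_one (fderiv ℝ Γ z u)
  let b := IccExtend zero_le_one (fderiv ℝ Γ z v)
  have hderiv (t : ℝ) (ht : t ∈ I) :
      HasDerivWithinAt (fun t => moserPath ω₀ ω₁ t (p t) (a t) (b t)) 0 I t := by
    have hΓt : p t = Γ z ⟨t, ht⟩ := IccExtend_of_mem _ _ ht
    have hmem : (t, p t) ∈ moserDomain ω₀ ω₁ B := hΓt ▸ hΓ.mem_curvesIn z hz ⟨t, ht⟩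
    have hp : HasDerivWithinAt p (moserField ω₀ ω₁ l (t, p t)) I t :=
      hΓt ▸ hΓ.hasDerivWithinAt hsmooth.continuousOn hz ht
    have hvar (w : E) : HasDerivWithinAt (IccExtend zero_le_one (fderiv ℝ Γ z w))
        ((fderiv ℝ (moserField ω₀ ω₁ l) (t, p t)).comp (.inr ℝ ℝ E)
          (IccExtend zero_le_one (fderiv ℝ Γ z w) t)) I t := by
      rw [hΓt, IccExtend_of_mem _ _ ht]
      exact hΓ.hasDerivWithinAt_fderiv hopen hsmooth hz w ht
    refine (hasDerivWithinAt_moserPath_apply (h₀.differentiableAt hB hmem.1)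
      (h₁.differentiableAt hB hmem.1) hp (hvar u) (hvar v)).congr_deriv ?_
    rw [lieDeriv_moserField hB h₀ h₁ hl hmem, hdl _ hmem.1, add_neg_cancel]
  have hconst := constant_of_derivWithin_zero
    (fun t ht => (hderiv t ht).differentiableWithinAt) (fun t ht => (hderiv t
      (Ico_subset_Icc_self ht)).derivWithin (uniqueDiffOn_Icc_zero_one t (Ico_subset_Icc_self ht)))
    1 ⟨zero_le_one, le_rfl⟩
  simpa [moserPath, p, a, b, hΓ.apply_zero hz, hΓ.fderiv_apply_zero hopen hsmooth hz] using hconst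

end Moser

section LocalTheorem

variable {E : Type u} {F : Type*} [NormedAddCommGroup E] [NormedSpace ℝ E]
  [NormedAddCommGroup F] [NormedSpace ℝ F] {ω₀ ω₁ η : E → E →L[ℝ] E →L[ℝ] ℝ} {B W : Set E}
  {α K M : ℝ}

theorem exists_primitive_norm_le {π : E →L[ℝ] E} (hπ : π.comp π = π) (hW : W ∈ 𝓝 0)
    (hη : IsClosedSmoothFormOn η W) (hα : 0 < α) (hηO : η =O[𝓝 0] fun z => ‖z - π z‖ ^ α) :
    ∃ B ⊆ W, IsOpen B ∧ 0 ∈ B ∧ ∃ (l : E → E →L[ℝ] ℝ) (K : ℝ), 0 ≤ K ∧ ContDiffOn ℝ ∞ l B ∧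
      (∀ z ∈ B, ∀ u v, extDerivOneForm l z u v = η z u v) ∧
      ∀ z ∈ B, ‖l z‖ ≤ K * ‖z - π z‖ ^ (α + 1) := by
  obtain ⟨C, hC, hbound⟩ := hηO.exists_nonneg
  obtain ⟨B, hBN, hB, h0B, hπB⟩ := exists_isOpen_mapsTo_retraction hπ
    (inter_mem hW hbound.bound)
  have hηB : IsClosedSmoothFormOn η B := hη.mono fun z hz => (hBN hz).1
  have hηle (z : E) (hz : z ∈ B) : ‖η z‖ ≤ C * ‖z - π z‖ ^ α := by
    simpa [Real.abs_rpow_of_nonneg] using (hBN hz).2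
  have hηπ (z : E) (hz : z ∈ B) : η (π z) = 0 := by
    have hmem : π z ∈ B := by
      simpa [retraction_apply] using hπB 0 ⟨le_rfl, zero_le_one⟩ hz
    have hππ : π (π z) = π z := DFunLike.congr_fun hπ z
    simpa [hππ, Real.zero_rpow hα.ne'] using hηle (π z) hmem
  refine ⟨B, fun z hz => (hBN hz).1, hB, h0B, homotopyOperator π η,
    C * (‖π‖ + ‖.id ℝ E - π‖), by positivity,
    contDiffOn_homotopyOperator hB hηB.contDiffOn hπB, fun z hz u v => ?_, fun z hz => ?_⟩
  · rw [extDerivOneForm_homotopyOperator hB hηB hπB hz, hηπ z hz, zero_apply, zero_apply, sub_zero]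
  · have hretract (s : ℝ) (hs : s ∈ I) : ‖η (retraction π s z)‖ ≤ C * ‖z - π z‖ ^ α := by
      refine (hηle _ (hπB s hs hz)).trans ?_
      gcongr
      rw [retraction_apply_sub hπ, norm_smul, Real.norm_of_nonneg hs.1]
      exact mul_le_of_le_one_left (norm_nonneg _) hs.2
    refine (norm_homotopyOperator_le hretract).trans_eq ?_
    rw [Real.rpow_add_one' (norm_nonneg _) (by linarith)]
    ring

theorem exists_eventually_moserPath_isInvertible [CompleteSpace E] {z : E}
    (h₀ : ContinuousAt ω₀ z) (h₁ : ContinuousAt ω₁ z) (heq : ω₁ z = ω₀ z)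
    (hinv : (ω₀ z).IsInvertible) : ∃ M, ∀ᶠ y in 𝓝 z, ∀ t ∈ I,
      (moserPath ω₀ ω₁ t y).IsInvertible ∧ ‖(moserPath ω₀ ω₁ t y).inverse‖ ≤ M :=
  let ⟨M, hM⟩ := exists_eventually_norm_inverse_le hinv
  ⟨M, eventually_forall_combination_mem hM h₀ h₁ heq⟩

theorem exists_isDiffeoOn_pullback_eq_of_primitive [CompleteSpace E] {R : E →L[ℝ] F}
    {l : E → E →L[ℝ] ℝ} (hB : IsOpen B) (h0B : 0 ∈ B) (h₀ : IsClosedSmoothFormOn ω₀ B)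
    (h₁ : IsClosedSmoothFormOn ω₁ B) (hl : ContDiffOn ℝ ∞ l B)
    (hdl : ∀ z ∈ B, ∀ u v, extDerivOneForm l z u v = ω₁ z u v - ω₀ z u v)
    (hinv : ∀ z ∈ B, ∀ t ∈ I, (moserPath ω₀ ω₁ t z).IsInvertible ∧
      ‖(moserPath ω₀ ω₁ t z).inverse‖ ≤ M)
    (hα : 0 < α) (hK : 0 ≤ K) (hlK : ∀ z ∈ B, ‖l z‖ ≤ K * ‖R z‖ ^ (α + 1)) :
    ∃ (V : Set E) (ψ : E → E) (C : ℝ), IsOpen V ∧ 0 ∈ V ∧ V ⊆ B ∧ 0 < C ∧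
      IsDiffeoOn ψ V (ψ '' V) ∧
      (∀ z ∈ V, ∀ u v, ω₁ (ψ z) (fderiv ℝ ψ z u) (fderiv ℝ ψ z v) = ω₀ z u v) ∧
      ∀ z ∈ V, ‖ψ z - z‖ ≤ C * ‖R z‖ ^ (α + 1) := by
  have hM : 0 ≤ M := (norm_nonneg _).trans (hinv 0 h0B 0 ⟨le_rfl, zero_le_one⟩).2
  have hMK : 0 ≤ M * K := mul_nonneg hM hK
  have hopen := isOpen_moserDomain hB h₀.contDiffOn h₁.contDiffOn
  have hsmooth := contDiffOn_moserField h₀.contDiffOn h₁.contDiffOn hl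
  have hfield (t : ℝ) (ht : t ∈ I) (z : E) (hz : (t, z) ∈ moserDomain ω₀ ω₁ B) :
      ‖moserField ω₀ ω₁ l (t, z)‖ ≤ M * K * ‖R z‖ ^ (α + 1) := by
    rw [mul_assoc]
    exact (norm_moserField_le (hinv z hz.1 t ht).2).trans
      (mul_le_mul_of_nonneg_left (hlK z hz.1) hM)
  obtain ⟨Γ, V, hΓ, h0V, hdiffeo, hdisp⟩ := exists_isSmoothFlowOn_isDiffeoOn hopen hsmooth
    (fun t => ⟨h0B, (hinv 0 h0B t t.2).1⟩) hα hMK hfield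
  refine ⟨V, fun z => Γ z 1, M * K * 2 ^ (α + 1) + 1, hΓ.isOpen, h0V, fun z hz => ?_,
    by positivity, hdiffeo, fun z hz u v => ?_, fun z hz => (hdisp z hz).trans ?_⟩
  · exact hΓ.apply_zero hz ▸ (hΓ.mem_curvesIn z hz 0).1
  · rw [hΓ.fderiv_apply_one hz, hΓ.fderiv_apply_one hz]
    exact hΓ.pullback_eq hB h₀ h₁ hl hdl hz u v
  · gcongr
    exact le_add_of_nonneg_right zero_le_one

theorem isInvertible_of_nondegenerate [FiniteDimensional ℝ E] {A : E →L[ℝ] E →L[ℝ] ℝ}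
    (hA : ∀ u, (∀ v, A u v = 0) → u = 0) : A.IsInvertible := by
  have hinj : Function.Injective (A : E →ₗ[ℝ] E →L[ℝ] ℝ) := by
    refine (injective_iff_map_eq_zero _).2 fun u hu => hA u fun v => ?_
    exact DFunLike.congr_fun hu v
  have hrank : Module.finrank ℝ E = Module.finrank ℝ (E →L[ℝ] ℝ) :=
    Subspace.dual_finrank_eq.symm.trans LinearMap.toContinuousLinearMap.finrank_eq
  exact ⟨(LinearEquiv.ofInjectiveOfFinrankEq _ hinj hrank).toContinuousLinearEquiv, rfl⟩

end LocalTheorem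

end DarbouxWeinstein

set_option maxSynthPendingDepth 3 in
open DarbouxWeinstein Set Topology in
theorem darboux_weinstein_general {E : Type*} [NormedAddCommGroup E] [NormedSpace ℝ E]
    [CompleteSpace E] {π : E →L[ℝ] E} (hπ : π.comp π = π) {W : Set E} (hW : IsOpen W)
    (h0 : 0 ∈ W) {ω₀ ω₁ : E → E →L[ℝ] E →L[ℝ] ℝ}
    (h₀ : IsClosedSmoothFormOn ω₀ W)
    (h₁ : IsClosedSmoothFormOn ω₁ W) (hinv : (ω₀ 0).IsInvertible) {α : ℝ}
    (hα : 0 < α) (hclose : (fun z => ω₁ z - ω₀ z) =O[𝓝 0] fun z => ‖z - π z‖ ^ α) :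
    ∃ (V : Set E) (ψ : E → E) (C : ℝ), IsOpen V ∧ 0 ∈ V ∧ V ⊆ W ∧ 0 < C ∧
      IsDiffeoOn ψ V (ψ '' V) ∧
      (∀ z ∈ V, ∀ u v, ω₁ (ψ z) (fderiv ℝ ψ z u) (fderiv ℝ ψ z v) = ω₀ z u v) ∧
      ∀ z ∈ V, ‖ψ z - z‖ ≤ C * ‖z - π z‖ ^ (α + 1) := by
  have himp := hclose.eq_zero_imp.self_of_nhds
  have heq : ω₁ 0 = ω₀ 0 := sub_eq_zero.1 (himp (by simp [Real.zero_rpow hα.ne']))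
  obtain ⟨M, hM⟩ := exists_eventually_moserPath_isInvertible
    (h₀.differentiableAt hW h0).continuousAt (h₁.differentiableAt hW h0).continuousAt heq hinv
  obtain ⟨B, hBW, hB, h0B, l, K, hK, hl, hdl, hlK⟩ := exists_primitive_norm_le hπ
    (Filter.inter_mem (hW.mem_nhds h0) hM) ((h₁.sub h₀ hW).mono inter_subset_left) hα hclose
  obtain ⟨V, ψ, C, hV, h0V, hVB, hψ⟩ :=
    exists_isDiffeoOn_pullback_eq_of_primitive (R := .id ℝ E - π) hB h0B
      (h₀.mono fun z hz => (hBW hz).1) (h₁.mono fun z hz => (hBW hz).1) hl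
      hdl (fun z hz => (hBW hz).2) hα hK hlK
  exact ⟨V, ψ, C, hV, h0V, fun z hz => (hBW (hVB hz)).1, hψ⟩

/-- Darboux–Weinstein theorem: if two smooth closed non-degenerate 2-forms `ω₀`,
`ω₁` on a neighborhood of `0` in `ℝ^d = ℝ^k_x × ℝ^{d−k}_y` agree to order
`O(|x|^α)`, then there is a local diffeomorphism `ψ` with `ψ*ω₁ = ω₀` and
`ψ = Id + O(|x|^{α+1})`. -/
theorem darboux_weinstein {k m : ℕ}
    (W : Set ((Fin k → ℝ) × (Fin m → ℝ))) (hW : IsOpen W)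
    (h0 : (0 : (Fin k → ℝ) × (Fin m → ℝ)) ∈ W)
    (ω₀ ω₁ : ((Fin k → ℝ) × (Fin m → ℝ)) →
      (((Fin k → ℝ) × (Fin m → ℝ)) →L[ℝ] ((Fin k → ℝ) × (Fin m → ℝ)) →L[ℝ] ℝ))
    (hsm₀ : ContDiffOn ℝ (⊤ : ℕ∞) ω₀ W) (hsm₁ : ContDiffOn ℝ (⊤ : ℕ∞) ω₁ W)
    (halt₀ : ∀ z ∈ W, ∀ u, ω₀ z u u = 0) (halt₁ : ∀ z ∈ W, ∀ u, ω₁ z u u = 0)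
    (hcl₀ : Closed2FormOn ω₀ W) (hcl₁ : Closed2FormOn ω₁ W)
    (hnd₀ : ∀ z ∈ W, ∀ u, (∀ v, ω₀ z u v = 0) → u = 0)
    (hnd₁ : ∀ z ∈ W, ∀ u, (∀ v, ω₁ z u v = 0) → u = 0)
    (α : ℝ) (hα : 1 ≤ α) (C : ℝ) (hC : 0 < C)
    (hclose : ∀ z ∈ W, ‖ω₁ z - ω₀ z‖ ≤ C * ‖z.1‖ ^ α) :
    ∃ (V : Set ((Fin k → ℝ) × (Fin m → ℝ)))
      (ψ : ((Fin k → ℝ) × (Fin m → ℝ)) → ((Fin k → ℝ) × (Fin m → ℝ))) (C' : ℝ),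
      IsOpen V ∧ (0 : (Fin k → ℝ) × (Fin m → ℝ)) ∈ V ∧ V ⊆ W ∧ 0 < C' ∧
      IsDiffeoOn ψ V (ψ '' V) ∧
      (∀ z ∈ V, ∀ u v : (Fin k → ℝ) × (Fin m → ℝ),
        ω₁ (ψ z) (fderiv ℝ ψ z u) (fderiv ℝ ψ z v) = ω₀ z u v) ∧
      (∀ z ∈ V, ‖ψ z - z‖ ≤ C' * ‖z.1‖ ^ (α + 1)) := by
  let π := ContinuousLinearMap.inr ℝ (Fin k → ℝ) (Fin m → ℝ) ∘L .snd ℝ (Fin k → ℝ) (Fin m → ℝ)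
  have hπ (z : (Fin k → ℝ) × (Fin m → ℝ)) : ‖z - π z‖ = ‖z.1‖ := by simp [π, Prod.norm_def]
  simp only [← hπ] at hclose ⊢
  refine darboux_weinstein_general (π := π) rfl hW h0 ⟨hsm₀, halt₀, hcl₀⟩ ⟨hsm₁, halt₁, hcl₁⟩
    (DarbouxWeinstein.isInvertible_of_nondegenerate (hnd₀ 0 h0)) (zero_lt_one.trans_le hα)
    (.of_bound C ?_)
  filter_upwards [hW.mem_nhds h0] with z hz
  rw [Real.norm_of_nonneg (by positivity)]
  exact hclose z hz
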